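/- Let G be a character on k⟨a,b⟩. Then for all graded posets P and Q, the quasisymmetric power series g̃F satisfies g̃F(P × Q) = g̃F(P) · g̃F(Q); that is, the chain map of the second kind is multiplicative with respect to the Cartesian product of posets. -/

import Mathlib

open scoped TensorProduct

noncomputable section

namespace Tcheb

/-! ### The algebra `R⟨a,b⟩` of ab-polynomials -/

/-- Words in the two noncommuting letters `a` (encoded `true`) and `b` (encoded `false`). -/
abbrev ABWord : Type := FreeMonoid Bool

/-- The ring `R⟨a,b⟩` of polynomials in two noncommuting variables `a` and `b`. -/
abbrev AB (R : Type) [CommRing R] : Type := MonoidAlgebra R ABWord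

variable (R : Type) [CommRing R]

/-- The ab-monomial corresponding to a word. -/
def word (l : List Bool) : AB R := MonoidAlgebra.of R ABWord (FreeMonoid.ofList l)

/-- The variable `a`. -/
def av : AB R := word R [true]
/-- The variable `b`. -/
def bv : AB R := word R [false]
/-- `c = a + b`. -/
def cv : AB R := av R + bv R
/-- `d = ab + ba`. -/
def dv : AB R := av R * bv R + bv R * av R
/-- `a - b`. -/
def ev : AB R := av R - bv R

/-- The linear map defined by prescribing values on the basis of ab-monomials. -/
def onBasis {M : Type} [AddCommMonoid M] [Module R M] (f : List Bool → M) :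
    AB R →ₗ[R] M :=
  (Finsupp.lift M R ABWord fun w => f (FreeMonoid.toList w)) ∘ₗ
    (MonoidAlgebra.coeffLinearEquiv R).toLinearMap

/-- The algebra map `A` with `A(a) = 1`, `A(b) = 0`. -/
def Amap : AB R →ₐ[R] R :=
  MonoidAlgebra.lift R R ABWord (FreeMonoid.lift fun x => if x then (1 : R) else 0)

/-- The coproduct on `R⟨a,b⟩`: on an ab-monomial `u₁ ⋯ u_k` it is
`Σ_{i=1}^k u₁ ⋯ u_{i-1} ⊗ u_{i+1} ⋯ u_k`. -/
def Delta : AB R →ₗ[R] AB R ⊗[R] AB R :=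
  onBasis R fun w => ∑ i ∈ Finset.range w.length,
    word R (w.take i) ⊗ₜ[R] word R (w.drop (i + 1))

/-- The linear map `C(u) = 2·A(u) + Σ_u A(u₍₁₎)·A(u₍₂₎)`. -/
def Cmap : AB R →ₗ[R] R :=
  2 • (Amap R).toLinearMap +
    (LinearMap.mul' R R ∘ₗ
      TensorProduct.map (Amap R).toLinearMap (Amap R).toLinearMap) ∘ₗ Delta R

/-- `κ(u) = A(u)·(a-b)^(deg u)` on homogeneous `u`, extended linearly. -/
def kappa : AB R →ₗ[R] AB R :=
  onBasis R fun w => Amap R (word R w) • ev R ^ w.length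

/-- `ν(u) = C(u)·(a-b)^(deg u)` on homogeneous `u`, extended linearly. -/
def nuMap : AB R →ₗ[R] AB R :=
  onBasis R fun w => Cmap R (word R w) • ev R ^ w.length

end Tcheb

namespace Tcheb

/-- Cutting a word into the list of segments between the (sorted) cut positions. -/
def segments : List Bool → List ℕ → List (List Bool)
  | l, [] => [l]
  | l, i :: rest => l.take i :: segments (l.drop (i + 1)) (rest.map fun j => j - (i + 1))
  termination_by _ cuts => cuts.length
  decreasing_by simp

variable (R : Type) [CommRing R]

/-- For segments `[s₁, …, s_k]` this is `ν(s₁)·b·ν(s₂)·b ⋯ b·ν(s_{k-1})·b·κ(s_k)`. -/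
def chainProd : List (List Bool) → AB R
  | [] => 1
  | [s] => kappa R (word R s)
  | s :: rest => nuMap R (word R s) * bv R * chainProd rest

/-- The Tchebyshev transform (of the first kind) on ab-polynomials:
`T(u) = Σ_{k ≥ 1} Σ_u ν(u₍₁₎)·b·ν(u₍₂₎)·b ⋯ b·ν(u₍ₖ₋₁₎)·b·κ(u₍ₖ₎)`,
where the inner sum is over the `k`-fold coproduct.  On the ab-monomial basis this
is the sum, over all sets of positions of deleted letters, of the corresponding
products over the resulting segments. -/
def Tmap : AB R →ₗ[R] AB R :=
  onBasis R fun w => ∑ S : Finset (Fin w.length),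
    chainProd R (segments w ((S.sort (· ≤ ·)).map Fin.val))

/-- The `ω` map on a word: replace each occurrence of `ab` by `2d` and all
remaining letters by `c`. -/
def omegaWord : List Bool → AB R
  | [] => 1
  | true :: false :: rest => (2 * dv R) * omegaWord rest
  | _ :: rest => cv R * omegaWord rest

/-- The `ω` map of Billera–Ehrenborg–Readdy. -/
def omegaMap : AB R →ₗ[R] AB R := onBasis R fun w => omegaWord R w

/-- The reversal involution `u ↦ u*` of ab-polynomials. -/
def revMap : AB R →ₗ[R] AB R := onBasis R fun w => word R w.reverse

/-- `H*(1) = 0` and `H*(u·a) = H*(u·b) = u`. -/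
def Hstar : AB R →ₗ[R] AB R :=
  onBasis R fun w => if w = [] then 0 else word R w.dropLast

/-- The Tchebyshev transform of the second kind `U(u) = H*(T(u·a))`. -/
def Umap : AB R →ₗ[R] AB R := Hstar R ∘ₗ Tmap R ∘ₗ LinearMap.mulRight R (av R)

/-- `σ(u) = Σ_u κ(u₍₁₎)·b·T(u₍₂₎)`. -/
def sigmaMap : AB R →ₗ[R] AB R :=
  LinearMap.mul' R (AB R) ∘ₗ
    TensorProduct.map (LinearMap.mulRight R (bv R) ∘ₗ kappa R) (Tmap R) ∘ₗ Delta R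

/-! ### Graded posets and the ab-index -/

/-- `rk` is a rank function for a bounded poset: `rk ⊥ = 0` and covers raise rank by one. -/
def IsRankFun (α : Type) [PartialOrder α] [OrderBot α] (rk : α → ℕ) : Prop :=
  rk ⊥ = 0 ∧ ∀ x y : α, x ⋖ y → rk y = rk x + 1

/-- `f` lists the elements of a chain in increasing order with respect to the
strict order relation `lt`. -/
def IsStrictChain {α : Type} (lt : α → α → Prop) {n : ℕ} (f : Fin (n + 1) → α) : Prop :=
  ∀ i j : Fin (n + 1), i < j → lt (f i) (f j)

/-- The weight of a chain `x₀ < x₁ < ⋯ < x_k`: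
`(a-b)^{ρ(x₀,x₁)-1}·b·(a-b)^{ρ(x₁,x₂)-1}·b ⋯ b·(a-b)^{ρ(x_{k-1},x_k)-1}`. -/
def chainWt {α : Type} (rk : α → ℕ) {n : ℕ} (f : Fin (n + 1) → α) : AB R :=
  (List.intersperse (bv R)
    (List.ofFn fun i : Fin n => ev R ^ (rk (f i.succ) - rk (f i.castSucc) - 1))).prod

/-- The ab-index `Ψ` of the graded poset with strict order relation `lt`, rank
function `rk`, minimum `b` and maximum `t`: the sum of the weights of all chains
from `b` to `t`. -/
def PsiRel {α : Type} (lt : α → α → Prop) (rk : α → ℕ) (b t : α) : AB R :=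
  ∑ᶠ (n : ℕ), ∑ᶠ (f : Fin (n + 1) → α)
    (_ : IsStrictChain lt f ∧ f 0 = b ∧ f (Fin.last n) = t), chainWt R rk f

end Tcheb

namespace Tcheb

/-! ### The Tchebyshev transform of a graded poset -/

section TPoset

variable (α : Type) [PartialOrder α] [BoundedOrder α]

/-- The elements `[x,y]` of the Tchebyshev transform: intervals of `P ∪ {-1̂}`,
i.e. pairs `(x,y)` with `x ∈ P ∪ {-1̂}`, `y ∈ P` and `x < y`. -/
def TPel : Type := {p : WithBot α × α // p.1 < (p.2 : WithBot α)}

/-- The underlying set of the Tchebyshev transform `T(P)`: the intervals `[x,y]`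
together with a new maximum element (`none`). -/
def TP : Type := Option (TPel α)

/-- The cover relation of the Tchebyshev transform `T(P)`:
`[x,y] ⋖ [y,w]` and `[x,y] ⋖ [x,w]` whenever `y ⋖ w` in `P`, and `[x,1̂] ⋖ 1̂_{T(P)}`. -/
inductive TPcov : TP α → TP α → Prop
  | up {x : WithBot α} {y w : α} (h1 : x < (y : WithBot α))
      (h2 : (y : WithBot α) < (w : WithBot α)) (hc : y ⋖ w) :
      TPcov (some ⟨(x, y), h1⟩) (some ⟨((y : WithBot α), w), h2⟩)
  | same {x : WithBot α} {y w : α} (h1 : x < (y : WithBot α))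
      (h2 : x < (w : WithBot α)) (hc : y ⋖ w) :
      TPcov (some ⟨(x, y), h1⟩) (some ⟨(x, w), h2⟩)
  | top {x : WithBot α} (h1 : x < ((⊤ : α) : WithBot α)) :
      TPcov (some ⟨(x, (⊤ : α)), h1⟩) none

/-- The strict order relation of `T(P)`, generated by the cover relation. -/
def TPlt : TP α → TP α → Prop := Relation.TransGen (TPcov α)

/-- The order relation of `T(P)`, generated by the cover relation. -/
def TPle : TP α → TP α → Prop := Relation.ReflTransGen (TPcov α)

/-- The minimum element `[-1̂, 0̂]` of `T(P)`. -/
def TPbot : TP α := some ⟨((⊥ : WithBot α), (⊥ : α)), WithBot.bot_lt_coe _⟩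

/-- The maximum element `1̂_{T(P)}` of `T(P)`. -/
def TPtop : TP α := none

/-- The rank function of `T(P)`: `ρ([x,y]) = ρ(y)` and `ρ(1̂_{T(P)}) = ρ(P) + 1`. -/
def TPrk (rk : α → ℕ) : TP α → ℕ
  | some p => rk p.1.2
  | none => rk (⊤ : α) + 1

theorem TPbot_ne_TPtop : TPbot α ≠ TPtop α := Option.some_ne_none _

/-- The map `z : T(P) → P ∪ {2̂}` with `z([x,y]) = y` and `z(1̂_{T(P)}) = 2̂`. -/
def zmap : TP α → WithTop α
  | some p => (p.1.2 : WithTop α)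
  | none => ⊤

/-- The number of elements of the interval `[u,v]` of `P`, for `u, v ∈ P ∪ {2̂}`. -/
def intervalCard (u v : WithTop α) : ℕ :=
  Set.ncard {t : α | u ≤ (t : WithTop α) ∧ (t : WithTop α) ≤ v}

end TPoset

/-! ### The dual diamond product -/

/-- The strict order relation of the dual diamond product
`P ◇* Q = ((P ∖ {1̂}) × (Q ∖ {1̂})) ∪ {1̂}` (with `none` the new maximum), built from
the order relations `leA, ltA` and `leB, ltB` of the two factors. -/
def dsLT {A B : Type} (leA ltA : A → A → Prop) (leB ltB : B → B → Prop) :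
    Option (A × B) → Option (A × B) → Prop
  | some p, some q => (leA p.1 q.1 ∧ leB p.2 q.2) ∧ (ltA p.1 q.1 ∨ ltB p.2 q.2)
  | some _, none => True
  | none, _ => False

/-! ### EL-labelings -/

/-- The list of edge labels along a chain (given as a list of poset elements). -/
def labelsList {α Λ : Type} (lam : α → α → Λ) (l : List α) : List Λ :=
  (l.zip l.tail).map fun p => lam p.1 p.2

/-- `l` is a maximal (saturated) chain of the interval `[x,y]` with respect to the
cover relation `cov`: it runs from `x` to `y` and every step is a cover. -/
def IsMaxChainList {α : Type} (cov : α → α → Prop) (x y : α) (l : List α) : Prop :=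
  l.head? = some x ∧ l.getLast? = some y ∧ l.Chain' cov

/-- An `EL`-labeling of the poset whose cover relation is `cov`, with labels in the
linearly ordered set `(Λ, lle, llt)`: every interval has a unique rising maximal
chain, which moreover is lexicographically least among all maximal chains of the
interval. -/
def IsELLabeling (α Λ : Type) (lle llt : Λ → Λ → Prop)
    (cov : α → α → Prop) (lam : α → α → Λ) : Prop :=
  ∀ x y : α, Relation.ReflTransGen cov x y →
    ∃ l : List α, (IsMaxChainList cov x y l ∧ (labelsList lam l).Chain' lle) ∧
      (∀ l' : List α, IsMaxChainList cov x y l' →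
        (labelsList lam l').Chain' lle → l' = l) ∧
      (∀ l' : List α, IsMaxChainList cov x y l' →
        labelsList lam l = labelsList lam l' ∨
          List.Lex llt (labelsList lam l) (labelsList lam l'))

/-! ### Eulerian posets -/

/-- A graded poset is Eulerian if every nontrivial interval `[x,y]` has the
same number of elements of even rank as of odd rank. -/
def IsEulerian (α : Type) [PartialOrder α] (rk : α → ℕ) : Prop :=
  ∀ x y : α, x < y →
    Set.ncard {z : α | x ≤ z ∧ z ≤ y ∧ Even (rk z)} =
      Set.ncard {z : α | x ≤ z ∧ z ≤ y ∧ ¬ Even (rk z)}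

/-! ### The face lattice of the crosspolytope -/

/-- A face of the `n`-dimensional crosspolytope: a partial sign vector, i.e. the
pair `(S, ε)` of a subset `S ⊆ {1,…,n}` (the set of coordinates where the function
takes a value `some`) together with a sign function `ε` on `S`. -/
def CrossEl (n : ℕ) : Type := Fin n → Option Bool

/-- `(S,ε) ≤ (T,δ)` iff `S ⊆ T` and `δ` restricted to `S` is `ε`. -/
instance (n : ℕ) : PartialOrder (CrossEl n) where
  le f g := ∀ i s, f i = some s → g i = some s
  le_refl f i s h := h
  le_trans f g h fg gh i s hi := gh i s (fg i s hi)
  le_antisymm f g fg gf := by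
    funext i
    cases hf : f i with
    | some s => exact (fg i s hf).symm
    | none =>
      cases hg : g i with
      | some s => exact absurd (gf i s hg) (by simp [hf])
      | none => rfl

/-- The face lattice of the `n`-dimensional crosspolytope: all partial sign
vectors together with a new maximum element. -/
abbrev Cross (n : ℕ) : Type := WithTop (CrossEl n)

/-- The rank function of the face lattice of the crosspolytope:
`ρ(S,ε) = |S|` and the maximum has rank `n + 1`. -/
def crossRk (n : ℕ) : Cross n → ℕ
  | none => n + 1
  | some f => (Finset.univ.filter fun i : Fin n => (f i).isSome).card

/-- The minimal element (the empty face) of the crosspolytope face lattice. -/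
def crossBot (n : ℕ) : Cross n := WithTop.some (fun _ => none)

/-- The maximal element of the crosspolytope face lattice. -/
def crossTop (n : ℕ) : Cross n := ⊤

/-! ### Quasisymmetric functions -/

/-- The monomial quasisymmetric function `M_{(p₁,…,p_k)}`, as a formal power
series in the countably many commuting variables `t₁, t₂, …` (indexed by `ℕ`). -/
def MQ (R : Type) [CommRing R] (ps : List ℕ) : MvPowerSeries ℕ R :=
  fun m => if ((m.support.sort (· ≤ ·)).map fun i => m i) = ps then 1 else 0

/-- The `t`-part of a monomial in the variables `s` (index `none`) and
`t₁, t₂, …` (indices `some i`). -/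
def tpart (m : Option ℕ →₀ ℕ) : ℕ →₀ ℕ :=
  Finsupp.comapDomain some m (Option.some_injective ℕ).injOn

/-- The type B monomial quasisymmetric function `s^p · M_{(p₁,…,p_k)}`, a formal
power series in the variables `s` (index `none`) and `t₁, t₂, …` (indices `some i`). -/
def MB (R : Type) [CommRing R] (p : ℕ) (ps : List ℕ) : MvPowerSeries (Option ℕ) R :=
  fun m => if m none = p ∧
      (((tpart m).support.sort (· ≤ ·)).map fun i => tpart m i) = ps then 1 else 0

/-- The quasisymmetric function `F(P)` of the graded poset with strict order
relation `lt`, rank function `rk`, minimum `b` and maximum `t`: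
`F(P) = Σ_c M_{(ρ(x₀,x₁),…,ρ(x_{k-1},x_k))}` over all chains `c` from `b` to `t`. -/
def FQ (R : Type) [CommRing R] {α : Type} (lt : α → α → Prop) (rk : α → ℕ)
    (b t : α) : MvPowerSeries ℕ R :=
  ∑ᶠ (n : ℕ), ∑ᶠ (f : Fin (n + 1) → α)
    (_ : IsStrictChain lt f ∧ f 0 = b ∧ f (Fin.last n) = t),
    MQ R (List.ofFn fun i : Fin n => rk (f i.succ) - rk (f i.castSucc))

/-- The type B quasisymmetric function `F_B(P) = Σ_{0̂ < x ≤ 1̂} s^{ρ(x)-1}·F([x,1̂])`,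
written as a sum over all chains `0̂ < x₀ < x₁ < ⋯ < x_k = 1̂` of
`s^{ρ(x₀)-1}·M_{(ρ(x₀,x₁),…,ρ(x_{k-1},x_k))}`. -/
def FB (R : Type) [CommRing R] {α : Type} (lt : α → α → Prop) (rk : α → ℕ)
    (b t : α) : MvPowerSeries (Option ℕ) R :=
  ∑ᶠ (n : ℕ), ∑ᶠ (f : Fin (n + 1) → α)
    (_ : IsStrictChain lt f ∧ lt b (f 0) ∧ f (Fin.last n) = t),
    MB R (rk (f 0) - 1) (List.ofFn fun i : Fin n => rk (f i.succ) - rk (f i.castSucc))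

/-! ### Characters and the chain maps -/

/-- A character on `k⟨a,b⟩`: a linear functional which is multiplicative with
respect to Cartesian products of graded posets (of rank at least 1). -/
def IsCharacter (k : Type) [Field k] (G : AB k →ₗ[k] k) : Prop :=
  ∀ (α β : Type) [Fintype α] [Fintype β] [PartialOrder α] [PartialOrder β]
    [BoundedOrder α] [BoundedOrder β], ∀ (rkα : α → ℕ) (rkβ : β → ℕ),
    IsRankFun α rkα → IsRankFun β rkβ → 1 ≤ rkα ⊤ → 1 ≤ rkβ ⊤ →
    G (PsiRel k (· < ·) (fun p : α × β => rkα p.1 + rkβ p.2)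
        ((⊥ : α), (⊥ : β)) ((⊤ : α), (⊤ : β))) =
      G (PsiRel k (· < ·) rkα ⊥ ⊤) * G (PsiRel k (· < ·) rkβ ⊥ ⊤)

/-- The quasisymmetric function image `g̃F(P)` of the chain map of the second kind:
`Σ_c G(Ψ([x₀,x₁])) ⋯ G(Ψ([x_{k-1},x_k])) · M_{(ρ(x₀,x₁),…,ρ(x_{k-1},x_k))}`,
summed over all chains `c = {b = x₀ < ⋯ < x_k = t}`. -/
def gtF (k : Type) [Field k] (G : AB k →ₗ[k] k) {α : Type} (lt : α → α → Prop)
    (rk : α → ℕ) (b t : α) : MvPowerSeries ℕ k :=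
  ∑ᶠ (n : ℕ), ∑ᶠ (f : Fin (n + 1) → α)
    (_ : IsStrictChain lt f ∧ f 0 = b ∧ f (Fin.last n) = t),
    (∏ i : Fin n, G (PsiRel k lt rk (f i.castSucc) (f i.succ))) •
      MQ k (List.ofFn fun i : Fin n => rk (f i.succ) - rk (f i.castSucc))

/-- The type B quasisymmetric function image `gF_B(P) = Σ_{0̂ < x ≤ 1̂}
s^{ρ(x)-1}·g̃F([x,1̂])` of the chain map of the first kind, written as a sum over
all chains `0̂ < x₀ < ⋯ < x_k = 1̂`. -/
def gFB (k : Type) [Field k] (G : AB k →ₗ[k] k) {α : Type} (lt : α → α → Prop)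
    (rk : α → ℕ) (b t : α) : MvPowerSeries (Option ℕ) k :=
  ∑ᶠ (n : ℕ), ∑ᶠ (f : Fin (n + 1) → α)
    (_ : IsStrictChain lt f ∧ lt b (f 0) ∧ f (Fin.last n) = t),
    (∏ i : Fin n, G (PsiRel k lt rk (f i.castSucc) (f i.succ))) •
      MB k (rk (f 0) - 1) (List.ofFn fun i : Fin n => rk (f i.succ) - rk (f i.castSucc))

/-- The space of homogeneous ab-polynomials of degree `n`. -/
def ABhomog (k : Type) [Field k] (n : ℕ) : Submodule k (AB k) :=
  Submodule.span k {x : AB k | ∃ w : List Bool, w.length = n ∧ x = word k w}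

/-!
For a fixed monomial `t^m`, a chain contributes to the coefficient of `g̃F(P)` exactly when its
successive rank jumps are the nonzero exponents of `m` in order. Hence that coefficient is the
`(0̂, 1̂)` entry of an ordered product `∏ᵢ F_{m i}` in the incidence algebra of `P`, where
`F = Σ_d F_d` sends `[x, y]` to `G(Ψ([x, y]))` and is split according to rank. Normalising `F` to
be `1` on the diagonal gives `F_0 = 1`, so indices with `m i = 0` may be inserted freely.

That `G` is a character means `F_{P × Q} = F_P ⊗ F_Q`. Taking rank components yields
`(F_{P × Q})_d = Σ_{p + q = d} (F_P)_p ⊗ (F_Q)_q`, and multiplying these over the variables gives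
the Cauchy product formula for the coefficients.
-/

/-! ### Strict chains -/

section StrictChains

variable {α γ : Type} {n : ℕ}

/-- The chains `x = x₀ < x₁ < ⋯ < x_n = y`, as functions on `Fin (n + 1)`. The membership
condition is the one over which `PsiRel` and `gtF` sum. -/
def strictChains [Preorder α] (n : ℕ) (x y : α) : Set (Fin (n + 1) → α) :=
  {f | IsStrictChain (· < ·) f ∧ f 0 = x ∧ f (Fin.last n) = y}

theorem isStrictChain_lt_iff_strictMono [Preorder α] {f : Fin (n + 1) → α} :
    IsStrictChain (· < ·) f ↔ StrictMono f :=
  ⟨fun h i j => h i j, fun h _ _ hij => h hij⟩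

theorem mem_strictChains [Preorder α] {x y : α} {f : Fin (n + 1) → α} :
    f ∈ strictChains n x y ↔ StrictMono f ∧ f 0 = x ∧ f (Fin.last n) = y :=
  and_congr_left' isStrictChain_lt_iff_strictMono

theorem apply_mem_Icc_of_mem_strictChains [Preorder α] {x y : α} {f : Fin (n + 1) → α}
    (hf : f ∈ strictChains n x y) (i : Fin (n + 1)) : f i ∈ Set.Icc x y := by
  obtain ⟨hmono, rfl, rfl⟩ := mem_strictChains.1 hf
  exact ⟨hmono.monotone (Fin.zero_le i), hmono.monotone (Fin.le_last i)⟩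

theorem finite_strictChains [Preorder α] [LocallyFiniteOrder α] (n : ℕ) (x y : α) :
    (strictChains n x y).Finite :=
  (Set.Finite.pi' fun _ => Set.finite_Icc x y).subset
    fun _ hf => apply_mem_Icc_of_mem_strictChains hf

theorem lt_card_Icc_of_mem_strictChains [Preorder α] [LocallyFiniteOrder α] {x y : α}
    {f : Fin (n + 1) → α} (hf : f ∈ strictChains n x y) : n < (Finset.Icc x y).card := by
  have hcard := Finset.card_le_card_of_injOn (s := Finset.univ) (t := Finset.Icc x y) f
    (fun i _ => by simpa using apply_mem_Icc_of_mem_strictChains hf i)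
    (mem_strictChains.1 hf).1.injective.injOn
  simpa using hcard

theorem strictChains_zero_self [Preorder α] (x : α) : strictChains 0 x x = {fun _ => x} := by
  ext f
  simp [mem_strictChains, Subsingleton.strictMono, funext_iff, Fin.forall_fin_one]

theorem strictChains_zero_of_ne [Preorder α] {x y : α} (hxy : x ≠ y) :
    strictChains 0 x y = ∅ :=
  Set.eq_empty_of_forall_notMem fun _ hf => hxy (hf.2.1.symm.trans hf.2.2)

theorem strictChains_succ [Preorder α] (n : ℕ) (x y : α) :
    strictChains (n + 1) x y = ⋃ z ∈ Set.Ioc x y, Fin.cons x '' strictChains n z y := by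
  ext f
  simp only [Set.mem_iUnion, Set.mem_image, exists_prop]
  constructor
  · intro hf
    obtain ⟨hmono, rfl, hlast⟩ := mem_strictChains.1 hf
    exact ⟨f 1, ⟨hmono Fin.zero_lt_one, (apply_mem_Icc_of_mem_strictChains hf 1).2⟩, Fin.tail f,
      mem_strictChains.2 ⟨hmono.comp Fin.strictMono_succ, rfl, hlast⟩, Fin.cons_self_tail f⟩
  · rintro ⟨z, hz, g, hg, rfl⟩
    obtain ⟨hmono, rfl, rfl⟩ := mem_strictChains.1 hg
    exact mem_strictChains.2 ⟨Fin.strictMono_cons.2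
      ⟨fun j => hz.1.trans_le (hmono.monotone (Fin.zero_le j)), hmono⟩, rfl, rfl⟩

theorem finsum_mem_strictChains_succ [Preorder α] [LocallyFiniteOrder α] {M : Type*}
    [AddCommMonoid M] (n : ℕ) (x y : α) (w : (Fin (n + 2) → α) → M) :
    ∑ᶠ f ∈ strictChains (n + 1) x y, w f =
      ∑ z ∈ Finset.Ioc x y, ∑ᶠ f ∈ strictChains n z y, w (Fin.cons x f) := by
  have hdisj : (Set.Ioc x y).PairwiseDisjoint
      fun z => Fin.cons (α := fun _ => α) x '' strictChains n z y := by
    rintro z - z' - hne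
    refine Set.disjoint_left.2 ?_
    rintro _ ⟨g, hg, rfl⟩ ⟨g', hg', heq⟩
    obtain rfl : g' = g := Fin.cons_right_injective (α := fun _ => α) x heq
    exact hne (hg.2.1.symm.trans hg'.2.1)
  rw [strictChains_succ, finsum_mem_biUnion hdisj (Set.finite_Ioc x y)
    fun z _ => (finite_strictChains n z y).image _, ← Finset.coe_Ioc, finsum_mem_coe_finset]
  exact Finset.sum_congr rfl fun z _ =>
    finsum_mem_image (Fin.cons_right_injective (α := fun _ => α) x).injOn

theorem bijOn_strictChains_orderEmbedding [PartialOrder γ] [PartialOrder α] (e : γ ↪o α) {b t : γ}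
    (he : Set.Icc (e b) (e t) ⊆ Set.range e) :
    Set.BijOn (e ∘ ·) (strictChains n b t) (strictChains n (e b) (e t)) := by
  refine ⟨fun f hf => ?_, e.injective.comp_left.injOn, fun f hf => ?_⟩
  · obtain ⟨hmono, rfl, rfl⟩ := mem_strictChains.1 hf
    exact mem_strictChains.2 ⟨e.strictMono.comp hmono, rfl, rfl⟩
  · choose g hg using fun i => he (apply_mem_Icc_of_mem_strictChains hf i)
    obtain rfl : e ∘ g = f := funext hg
    obtain ⟨hmono, hbot, htop⟩ := mem_strictChains.1 hf
    exact ⟨g, mem_strictChains.2 ⟨fun i j hij => e.lt_iff_lt.1 (hmono hij),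
      e.injective hbot, e.injective htop⟩, rfl⟩

theorem PsiRel_orderEmbedding (R : Type) [CommRing R] [PartialOrder γ] [PartialOrder α]
    {rkα : α → ℕ} {rkγ : γ → ℕ} (e : γ ↪o α) {b t : γ}
    (he : Set.Icc (e b) (e t) ⊆ Set.range e) (c : ℕ) (hrk : ∀ u, rkα (e u) = rkγ u + c) :
    PsiRel R (· < ·) rkα (e b) (e t) = PsiRel R (· < ·) rkγ b t := by
  refine finsum_congr fun n => (finsum_mem_eq_of_bijOn _
    (bijOn_strictChains_orderEmbedding e he) fun f _ => ?_).symm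
  simp only [chainWt, Function.comp_apply, hrk, Nat.add_sub_add_right]

end StrictChains

open Finset.HasAntidiagonal (antidiagonal mem_antidiagonal)

/-! ### Rank components in the incidence algebra -/

section RankPart

variable {R α β ι : Type*}

theorem incidenceAlgebra_sum_apply [AddCommMonoid R] [LE α] (s : Finset ι)
    (F : ι → IncidenceAlgebra R α) (x y : α) : (∑ i ∈ s, F i) x y = ∑ i ∈ s, F i x y := by
  classical
  induction s using Finset.induction_on with
  | empty => rfl
  | insert i s hi ih => rw [Finset.sum_insert hi, Finset.sum_insert hi, ← ih]; rfl

theorem incidenceAlgebra_prod_ofFn_apply {α : Type} [CommSemiring R] [PartialOrder α]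
    [LocallyFiniteOrder α] [DecidableEq α] {n : ℕ} (M : Fin n → IncidenceAlgebra R α)
    (hM : ∀ i z, M i z z = 0) (x y : α) :
    (List.ofFn M).prod x y =
      ∑ᶠ f ∈ strictChains n x y, ∏ i : Fin n, M i (f i.castSucc) (f i.succ) := by
  induction n generalizing x with
  | zero =>
    rw [List.ofFn_zero, List.prod_nil, IncidenceAlgebra.one_apply]
    split_ifs with hxy
    · subst hxy
      simp [strictChains_zero_self]
    · simp [strictChains_zero_of_ne hxy]
  | succ n ih =>
    have hIoc : Finset.Ioc x y ⊆ Finset.Icc x y := Finset.Ioc_subset_Icc_self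
    rw [List.ofFn_succ, List.prod_cons, IncidenceAlgebra.mul_apply, finsum_mem_strictChains_succ,
      ← Finset.sum_subset hIoc fun z hz hz' => ?_]
    · refine Finset.sum_congr rfl fun z _ => ?_
      rw [ih _ fun i => hM i.succ, mul_finsum_mem' _ _ (finite_strictChains n z y)]
      refine finsum_mem_congr rfl fun f hf => ?_
      simp [Fin.prod_univ_succ, hf.2.1]
    · obtain rfl : x = z := by
        simp only [Finset.mem_Icc, Finset.mem_Ioc, not_and'] at hz hz'
        exact eq_of_le_of_not_lt hz.1 (hz' hz.2)
      rw [hM, zero_mul]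

/-- The component of `F` of rank `d`: the restriction of `F` to the intervals `[x, y]` with
`ρ(x, y) = d`. -/
def rankPart [Zero R] [LE α] (rk : α → ℕ) (F : IncidenceAlgebra R α) (d : ℕ) :
    IncidenceAlgebra R α where
  toFun x y := if rk y = rk x + d then F x y else 0
  eq_zero_of_not_le' x y hxy := by rw [IncidenceAlgebra.apply_eq_zero_of_not_le hxy F, ite_self]

theorem rankPart_apply [Zero R] [LE α] (rk : α → ℕ) (F : IncidenceAlgebra R α) (d : ℕ) (x y : α) :
    rankPart rk F d x y = if rk y = rk x + d then F x y else 0 := rfl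

theorem rankPart_zero [Zero R] [One R] [PartialOrder α] [DecidableEq α] {rk : α → ℕ}
    (hrk : StrictMono rk) {F : IncidenceAlgebra R α} (hF : ∀ x, F x x = 1) :
    rankPart rk F 0 = 1 := by
  ext x y hxy
  rcases hxy.eq_or_lt with rfl | hlt
  · simp [rankPart_apply, hF]
  · simp [rankPart_apply, (hrk hlt).ne', hlt.ne]

theorem rankPart_prod [Ring R] [Preorder α] [Preorder β] {rkα : α → ℕ} {rkβ : β → ℕ}
    (hα : Monotone rkα) (hβ : Monotone rkβ) (F : IncidenceAlgebra R α) (H : IncidenceAlgebra R β)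
    (d : ℕ) :
    rankPart (fun p : α × β => rkα p.1 + rkβ p.2) (F.prod H) d =
      ∑ c ∈ antidiagonal d, (rankPart rkα F c.1).prod (rankPart rkβ H c.2) := by
  ext ⟨a, b⟩ ⟨a', b'⟩ hle
  obtain ⟨p, hp⟩ := Nat.exists_eq_add_of_le (hα hle.1)
  obtain ⟨q, hq⟩ := Nat.exists_eq_add_of_le (hβ hle.2)
  dsimp only at hp hq
  have hrank : rkα a + p + (rkβ b + q) = rkα a + rkβ b + d ↔ p + q = d := by omega
  have hpair (c : ℕ × ℕ) : p = c.1 ∧ q = c.2 ↔ (p, q) = c := by rw [Prod.ext_iff]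
  simp only [incidenceAlgebra_sum_apply, IncidenceAlgebra.prod_mk, rankPart_apply, hp, hq, hrank,
    Nat.add_left_cancel_iff, ite_zero_mul_ite_zero, hpair, Finset.sum_ite_eq, mem_antidiagonal]

end RankPart

/-! ### Ordered products of rank components -/

section RankProd

variable {R α β ι : Type*}

/-- The ordered product of the rank components `F_{m i}`, for `i` running through `l`. -/
def rankProd [Semiring R] [PartialOrder α] [LocallyFiniteOrder α] [DecidableEq α] (rk : α → ℕ)
    (F : IncidenceAlgebra R α) (l : List ι) (m : ι →₀ ℕ) : IncidenceAlgebra R α :=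
  (l.map fun i => rankPart rk F (m i)).prod

theorem rankProd_filter_ne_zero [Semiring R] [PartialOrder α] [LocallyFiniteOrder α]
    [DecidableEq α] {rk : α → ℕ} (hrk : StrictMono rk) {F : IncidenceAlgebra R α}
    (hF : ∀ x, F x x = 1) (l : List ι) (m : ι →₀ ℕ) :
    rankProd rk F (l.filter (m · ≠ 0)) m = rankProd rk F l m := by
  simp only [rankProd]
  induction l with
  | nil => rfl
  | cons j l ih => by_cases hj : m j = 0 <;> simp_all [rankPart_zero hrk hF]

theorem rankProd_cons_single_add [Semiring R] [PartialOrder α] [LocallyFiniteOrder α]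
    [DecidableEq α] (rk : α → ℕ) (F : IncidenceAlgebra R α) {j : ι} {l : List ι} (hj : j ∉ l)
    (d : ℕ) {m : ι →₀ ℕ} (hm : m j = 0) :
    rankProd rk F (j :: l) (Finsupp.single j d + m) = rankPart rk F d * rankProd rk F l m := by
  have hl : ∀ i ∈ l, (Finsupp.single j d + m) i = m i := fun i hi => by
    simp [Finsupp.single_eq_of_ne (ne_of_mem_of_not_mem hi hj)]
  rw [rankProd, List.map_cons, List.prod_cons,
    List.map_congr_left fun i hi => congrArg (rankPart rk F) (hl i hi), rankProd]
  simp [hm]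

theorem sum_antidiagonal_eq_sum_single_add_erase [DecidableEq ι] {M : Type*} [AddCommMonoid M]
    (j : ι) (m : ι →₀ ℕ) (w : (ι →₀ ℕ) × (ι →₀ ℕ) → M) :
    ∑ p ∈ antidiagonal m, w p =
      ∑ c ∈ antidiagonal (m j), ∑ q ∈ antidiagonal (m.erase j),
        w (Finsupp.single j c.1 + q.1, Finsupp.single j c.2 + q.2) := by
  rw [← Finset.sum_product']
  refine Finset.sum_nbij' (fun p => ((p.1 j, p.2 j), (p.1.erase j, p.2.erase j)))
    (fun r => (Finsupp.single j r.1.1 + r.2.1, Finsupp.single j r.1.2 + r.2.2)) ?_ ?_ ?_ ?_ ?_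
  · intro p hp
    rw [mem_antidiagonal] at hp
    simp [mem_antidiagonal, ← hp]
  · rintro ⟨c, q⟩ h
    simp only [Finset.mem_product, mem_antidiagonal] at h ⊢
    rw [add_add_add_comm, ← Finsupp.single_add, h.1, h.2, Finsupp.single_add_erase]
  · intro p _
    simp only [Finsupp.single_add_erase]
  · rintro ⟨c, q⟩ h
    simp only [Finset.mem_product, mem_antidiagonal] at h
    have hq : q.1 j + q.2 j = 0 := by rw [← Finsupp.add_apply, h.2, Finsupp.erase_same]
    simp [Finsupp.erase_of_notMem_support, Nat.add_eq_zero_iff.1 hq]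
  · intro p _
    simp only [Finsupp.single_add_erase]

theorem rankProd_prod [CommRing R] [PartialOrder α] [PartialOrder β] [LocallyFiniteOrder α]
    [LocallyFiniteOrder β] [DecidableEq α] [DecidableEq β] [DecidableLE (α × β)] [DecidableEq ι]
    {rkα : α → ℕ} {rkβ : β → ℕ} (hα : Monotone rkα) (hβ : Monotone rkβ)
    (F : IncidenceAlgebra R α) (H : IncidenceAlgebra R β) {l : List ι} (hl : l.Nodup)
    {m : ι →₀ ℕ} (hm : ∀ i, m i ≠ 0 → i ∈ l) :
    rankProd (fun p : α × β => rkα p.1 + rkβ p.2) (F.prod H) l m =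
      ∑ p ∈ antidiagonal m, (rankProd rkα F l p.1).prod (rankProd rkβ H l p.2) := by
  induction l generalizing m with
  | nil =>
    obtain rfl : m = 0 := Finsupp.ext fun i => by_contra fun hi => by simpa using hm i hi
    simp [rankProd, IncidenceAlgebra.one_prod_one]
  | cons j l ih =>
    obtain ⟨hj, hl⟩ := List.nodup_cons.1 hl
    have herase : ∀ i, m.erase j i ≠ 0 → i ∈ l := fun i hi => by
      have hij : i ≠ j := by rintro rfl; simp at hi
      exact List.mem_of_ne_of_mem hij (hm i (by rwa [Finsupp.erase_ne hij] at hi))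
    rw [sum_antidiagonal_eq_sum_single_add_erase j]
    conv_lhs => rw [← Finsupp.single_add_erase j m]
    rw [rankProd_cons_single_add _ _ hj _ Finsupp.erase_same, ih hl herase,
      rankPart_prod hα hβ, Finset.sum_mul_sum]
    refine Finset.sum_congr rfl fun c _ => Finset.sum_congr rfl fun q hq => ?_
    have hqj : q.1 j + q.2 j = 0 := by
      rw [← Finsupp.add_apply, mem_antidiagonal.1 hq, Finsupp.erase_same]
    rw [Nat.add_eq_zero_iff] at hqj
    rw [rankProd_cons_single_add _ _ hj _ hqj.1, rankProd_cons_single_add _ _ hj _ hqj.2,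
      IncidenceAlgebra.prod_mul_prod]

end RankProd

/-! ### Characters on intervals -/

section IntervalValue

variable (k : Type) [Field k] (G : AB k →ₗ[k] k)

open Classical in
/-- The element `[x, y] ↦ G(Ψ([x, y]))` of the incidence algebra, set to `1` on one-element
intervals. The normalisation is needed because a character is constrained only on posets of
positive rank, so `G(Ψ([x, x])) = G(1)` may differ from `1`. -/
def intervalValue {α : Type} [PartialOrder α] (rk : α → ℕ) : IncidenceAlgebra k α where
  toFun x y := if x = y then 1 else if x < y then G (PsiRel k (· < ·) rk x y) else 0
  eq_zero_of_not_le' x y hxy := by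
    rw [if_neg fun h => hxy h.le, if_neg fun h => hxy h.le]

variable {k G} {α β : Type} [PartialOrder α] [PartialOrder β]

theorem intervalValue_self (rk : α → ℕ) (x : α) : intervalValue k G rk x x = 1 :=
  if_pos rfl

theorem intervalValue_of_lt (rk : α → ℕ) {x y : α} (hxy : x < y) :
    intervalValue k G rk x y = G (PsiRel k (· < ·) rk x y) :=
  (if_neg hxy.ne).trans (if_pos hxy)

theorem strictMono_of_covBy_rank [LocallyFiniteOrder α] {rk : α → ℕ}
    (hrk : ∀ x y, x ⋖ y → rk y = rk x + 1) : StrictMono rk :=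
  (strictMono_iff_forall_covBy _).2 fun x y hxy => by rw [hrk x y hxy]; exact Nat.lt_succ_self _

theorem strictMono_rank_prod {rkα : α → ℕ} {rkβ : β → ℕ} (hα : StrictMono rkα)
    (hβ : StrictMono rkβ) : StrictMono fun p : α × β => rkα p.1 + rkβ p.2 := by
  rintro p q hpq
  rcases Prod.lt_iff.1 hpq with ⟨h₁, h₂⟩ | ⟨h₁, h₂⟩
  · exact add_lt_add_of_lt_of_le (hα h₁) (hβ.monotone h₂)
  · exact add_lt_add_of_le_of_lt (hα.monotone h₁) (hβ h₂)

theorem isRankFun_Icc {rk : α → ℕ} (hmono : Monotone rk)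
    (hrk : ∀ x y, x ⋖ y → rk y = rk x + 1) (x y : α) [Fact (x ≤ y)] :
    IsRankFun (Set.Icc x y) (fun z => rk z - rk x) := by
  refine ⟨Nat.sub_self _, fun u v huv => ?_⟩
  have hcov : (u : α) ⋖ v := by
    refine (Set.OrdConnected.apply_covBy_apply_iff
      (OrderEmbedding.subtype (· ∈ Set.Icc x y)) ?_).2 huv
    rw [OrderEmbedding.coe_subtype, Subtype.range_coe_subtype]
    exact Set.ordConnected_Icc
  change rk v - rk x = rk u - rk x + 1
  rw [hrk _ _ hcov, Nat.sub_add_comm (hmono u.2.1)]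

theorem PsiRel_Icc (R : Type) [CommRing R] {rk : α → ℕ} (hmono : Monotone rk) (x y : α)
    [Fact (x ≤ y)] :
    PsiRel R (· < ·) (fun z : Set.Icc x y => rk z - rk x) ⊥ ⊤ = PsiRel R (· < ·) rk x y := by
  refine (PsiRel_orderEmbedding R (OrderEmbedding.subtype (· ∈ Set.Icc x y)) (b := ⊥) (t := ⊤)
    ?_ (rk x) fun u => (Nat.sub_add_cancel (hmono u.2.1)).symm).symm
  exact fun z hz => ⟨⟨z, hz⟩, rfl⟩

theorem PsiRel_Icc_prod_Icc (R : Type) [CommRing R] {rkα : α → ℕ} {rkβ : β → ℕ}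
    (hα : Monotone rkα) (hβ : Monotone rkβ) (a a' : α) (b b' : β) [Fact (a ≤ a')]
    [Fact (b ≤ b')] :
    PsiRel R (· < ·) (fun p : Set.Icc a a' × Set.Icc b b' =>
        (rkα p.1 - rkα a) + (rkβ p.2 - rkβ b)) (⊥, ⊥) (⊤, ⊤) =
      PsiRel R (· < ·) (fun p : α × β => rkα p.1 + rkβ p.2) (a, b) (a', b') := by
  let e : Set.Icc a a' × Set.Icc b b' ↪o α × β :=
    OrderEmbedding.ofMapLEIff (fun u => (u.1, u.2)) fun _ _ => Iff.rfl
  have he : Set.Icc (e (⊥, ⊥)) (e (⊤, ⊤)) ⊆ Set.range e := fun z hz =>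
    ⟨(⟨z.1, hz.1.1, hz.2.1⟩, ⟨z.2, hz.1.2, hz.2.2⟩), rfl⟩
  refine (PsiRel_orderEmbedding R e he (rkα a + rkβ b) fun u => ?_).symm
  have h₁ := hα u.1.2.1
  have h₂ := hβ u.2.2.1
  change rkα u.1 + rkβ u.2 = rkα u.1 - rkα a + (rkβ u.2 - rkβ b) + (rkα a + rkβ b)
  omega

theorem PsiRel_prod_left_self (R : Type) [CommRing R] (rkα : α → ℕ) (rkβ : β → ℕ) (a : α)
    (b b' : β) :
    PsiRel R (· < ·) (fun p : α × β => rkα p.1 + rkβ p.2) (a, b) (a, b') =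
      PsiRel R (· < ·) rkβ b b' := by
  let e : β ↪o α × β := OrderEmbedding.ofMapLEIff (Prod.mk a) fun _ _ => Prod.mk_le_mk_iff_right
  refine PsiRel_orderEmbedding R e (fun z hz => ?_) (rkα a) fun u => Nat.add_comm _ _
  exact ⟨z.2, Prod.ext (le_antisymm hz.1.1 hz.2.1) rfl⟩

theorem PsiRel_prod_right_self (R : Type) [CommRing R] (rkα : α → ℕ) (rkβ : β → ℕ) (a a' : α)
    (b : β) :
    PsiRel R (· < ·) (fun p : α × β => rkα p.1 + rkβ p.2) (a, b) (a', b) =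
      PsiRel R (· < ·) rkα a a' := by
  let e : α ↪o α × β := OrderEmbedding.ofMapLEIff (·, b) fun _ _ => Prod.mk_le_mk_iff_left
  refine PsiRel_orderEmbedding R e (fun z hz => ?_) (rkβ b) fun u => rfl
  exact ⟨z.1, Prod.ext rfl (le_antisymm hz.1.2 hz.2.2)⟩

theorem IsCharacter.apply_PsiRel_prod [LocallyFiniteOrder α] [LocallyFiniteOrder β]
    (hG : IsCharacter k G) {rkα : α → ℕ} {rkβ : β → ℕ}
    (hα : ∀ x y, x ⋖ y → rkα y = rkα x + 1) (hβ : ∀ x y, x ⋖ y → rkβ y = rkβ x + 1)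
    {a a' : α} {b b' : β} (ha : a < a') (hb : b < b') :
    G (PsiRel k (· < ·) (fun p : α × β => rkα p.1 + rkβ p.2) (a, b) (a', b')) =
      G (PsiRel k (· < ·) rkα a a') * G (PsiRel k (· < ·) rkβ b b') := by
  have : Fact (a ≤ a') := ⟨ha.le⟩
  have : Fact (b ≤ b') := ⟨hb.le⟩
  have hmα := strictMono_of_covBy_rank hα
  have hmβ := strictMono_of_covBy_rank hβ
  have h := hG (Set.Icc a a') (Set.Icc b b') _ _ (isRankFun_Icc hmα.monotone hα a a')
    (isRankFun_Icc hmβ.monotone hβ b b') (Nat.sub_pos_of_lt (hmα ha)) (Nat.sub_pos_of_lt (hmβ hb))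
  rwa [PsiRel_Icc_prod_Icc k hmα.monotone hmβ.monotone, PsiRel_Icc k hmα.monotone,
    PsiRel_Icc k hmβ.monotone] at h

theorem intervalValue_prod [LocallyFiniteOrder α] [LocallyFiniteOrder β] (hG : IsCharacter k G)
    {rkα : α → ℕ} {rkβ : β → ℕ} (hα : ∀ x y, x ⋖ y → rkα y = rkα x + 1)
    (hβ : ∀ x y, x ⋖ y → rkβ y = rkβ x + 1) :
    intervalValue k G (fun p : α × β => rkα p.1 + rkβ p.2) =
      (intervalValue k G rkα).prod (intervalValue k G rkβ) := by
  ext ⟨a, b⟩ ⟨a', b'⟩ hle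
  rw [IncidenceAlgebra.prod_mk]
  obtain rfl | ha : a = a' ∨ a < a' := hle.1.eq_or_lt <;>
    obtain rfl | hb : b = b' ∨ b < b' := hle.2.eq_or_lt
  · simp only [intervalValue_self, mul_one]
  · rw [intervalValue_of_lt _ (Prod.mk_lt_mk_iff_right.2 hb), PsiRel_prod_left_self,
      intervalValue_self, intervalValue_of_lt _ hb, one_mul]
  · rw [intervalValue_of_lt _ (Prod.mk_lt_mk_iff_left.2 ha), PsiRel_prod_right_self,
      intervalValue_self, intervalValue_of_lt _ ha, mul_one]
  · rw [intervalValue_of_lt _ (Prod.mk_lt_mk.2 (Or.inl ⟨ha, hb.le⟩)), intervalValue_of_lt _ ha,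
      intervalValue_of_lt _ hb, hG.apply_PsiRel_prod hα hβ ha hb]

end IntervalValue

/-! ### Coefficients of the chain map -/

section Coefficients

variable {k : Type} [Field k] {G : AB k →ₗ[k] k} {α : Type} [PartialOrder α]
  [LocallyFiniteOrder α] {rk : α → ℕ}

theorem coeff_MQ (R : Type) [CommRing R] (ps : List ℕ) (m : ℕ →₀ ℕ) :
    MvPowerSeries.coeff m (MQ R ps) = if (m.support.sort (· ≤ ·)).map m = ps then 1 else 0 :=
  rfl

theorem coeff_gtF_eq_finsum (x y : α) (m : ℕ →₀ ℕ) :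
    MvPowerSeries.coeff m (gtF k G (· < ·) rk x y) =
      ∑ᶠ n : ℕ, ∑ᶠ f ∈ strictChains n x y,
        (∏ i : Fin n, G (PsiRel k (· < ·) rk (f i.castSucc) (f i.succ))) *
          MvPowerSeries.coeff m
            (MQ k (List.ofFn fun i : Fin n => rk (f i.succ) - rk (f i.castSucc))) := by
  refine (AddMonoidHom.map_finsum (MvPowerSeries.coeff m).toAddMonoidHom ?_).trans
    (finsum_congr fun n => AddMonoidHom.map_finsum_mem _ _ (finite_strictChains n x y))
  refine (Set.finite_lt_nat (Finset.Icc x y).card).subset fun n hn => ?_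
  obtain ⟨f, hf, -⟩ := exists_ne_zero_of_finsum_mem_ne_zero hn
  exact lt_card_Icc_of_mem_strictChains hf

theorem prod_ofFn_rankPart_apply {R : Type*} [CommSemiring R] [DecidableEq α]
    (hrk : Monotone rk) (F : IncidenceAlgebra R α) {n : ℕ} {p : Fin n → ℕ} (hp : ∀ i, p i ≠ 0)
    (x y : α) :
    (List.ofFn fun i => rankPart rk F (p i)).prod x y =
      ∑ᶠ f ∈ strictChains n x y, (∏ i : Fin n, F (f i.castSucc) (f i.succ)) *
        if List.ofFn p = List.ofFn fun i : Fin n => rk (f i.succ) - rk (f i.castSucc)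
          then 1 else 0 := by
  rw [incidenceAlgebra_prod_ofFn_apply _ fun i z => by simp [rankPart_apply, hp]]
  refine finsum_mem_congr rfl fun f hf => ?_
  have hjump : (∀ i ∈ Finset.univ, rk (f i.succ) = rk (f i.castSucc) + p i) ↔
      p = fun i => rk (f i.succ) - rk (f i.castSucc) := by
    simp only [Finset.mem_univ, forall_const, funext_iff]
    refine forall_congr' fun i => ?_
    have := hrk ((mem_strictChains.1 hf).1.monotone i.castSucc_lt_succ.le)
    omega
  simp only [rankPart_apply, Finset.prod_ite_zero, hjump, List.ofFn_inj, mul_ite, mul_one,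
    mul_zero]

theorem coeff_gtF_eq_rankProd_sort_support [DecidableEq α] (hrk : Monotone rk) (x y : α)
    (m : ℕ →₀ ℕ) :
    MvPowerSeries.coeff m (gtF k G (· < ·) rk x y) =
      rankProd rk (intervalValue k G rk) (m.support.sort (· ≤ ·)) m x y := by
  let l := m.support.sort (· ≤ ·)
  have hlist {M : Type} (w : ℕ → M) : l.map w = List.ofFn fun i : Fin l.length => w l[i] := by
    simp
  have hMQ (ps : List ℕ) : MvPowerSeries.coeff m (MQ k ps) =
      if (List.ofFn fun i : Fin l.length => m l[i]) = ps then 1 else 0 := by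
    rw [coeff_MQ, ← hlist]
  have hpos : ∀ i : Fin l.length, m l[i] ≠ 0 := fun i =>
    Finsupp.mem_support_iff.1 ((Finset.mem_sort _).1 (List.getElem_mem i.2))
  change _ = rankProd rk (intervalValue k G rk) l m x y
  rw [rankProd, hlist, prod_ofFn_rankPart_apply hrk _ hpos, coeff_gtF_eq_finsum,
    finsum_eq_single _ l.length fun n hn => ?_]
  · refine finsum_mem_congr rfl fun f hf => ?_
    rw [hMQ]
    refine congrArg (· * _) (Finset.prod_congr rfl fun i _ => ?_)
    rw [intervalValue_of_lt _ ((mem_strictChains.1 hf).1 i.castSucc_lt_succ)]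
  · refine finsum_mem_of_eqOn_zero fun f _ => ?_
    rw [hMQ, if_neg, mul_zero, Pi.zero_apply]
    intro h
    exact hn (by simpa only [List.length_ofFn] using (congrArg List.length h).symm)

theorem filter_sort_ne_zero {ι M : Type*} [LinearOrder ι] [Zero M] [DecidableEq M]
    {m : ι →₀ M} {s : Finset ι} (hs : m.support ⊆ s) :
    (s.sort (· ≤ ·)).filter (m · ≠ 0) = m.support.sort (· ≤ ·) := by
  refine List.Perm.eq_of_pairwise' (r := (· ≤ ·)) ((Finset.pairwise_sort _ _).filter _)
    (Finset.pairwise_sort _ _) ?_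
  rw [List.perm_ext_iff_of_nodup ((Finset.sort_nodup _ _).filter _) (Finset.sort_nodup _ _)]
  intro i
  simpa using fun hi => hs (Finsupp.mem_support_iff.2 hi)

theorem coeff_gtF [DecidableEq α] (hrk : StrictMono rk) (x y : α) {m : ℕ →₀ ℕ} {s : Finset ℕ}
    (hs : m.support ⊆ s) :
    MvPowerSeries.coeff m (gtF k G (· < ·) rk x y) =
      rankProd rk (intervalValue k G rk) (s.sort (· ≤ ·)) m x y := by
  rw [← rankProd_filter_ne_zero hrk (intervalValue_self rk), filter_sort_ne_zero hs,
    coeff_gtF_eq_rankProd_sort_support hrk.monotone]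

end Coefficients

theorem chain_map_second_kind_multiplicative_general
    (k : Type) [Field k] (G : AB k →ₗ[k] k) (hG : IsCharacter k G)
    (α β : Type) [PartialOrder α] [PartialOrder β] [LocallyFiniteOrder α] [LocallyFiniteOrder β]
    (rkα : α → ℕ) (rkβ : β → ℕ) (hα : ∀ x y, x ⋖ y → rkα y = rkα x + 1)
    (hβ : ∀ x y, x ⋖ y → rkβ y = rkβ x + 1) (a a' : α) (b b' : β) :
    gtF k G (· < ·) (fun p : α × β => rkα p.1 + rkβ p.2) (a, b) (a', b') =
      gtF k G (· < ·) rkα a a' * gtF k G (· < ·) rkβ b b' := by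
  classical
  have hmα := strictMono_of_covBy_rank hα
  have hmβ := strictMono_of_covBy_rank hβ
  ext m
  rw [MvPowerSeries.coeff_mul, coeff_gtF (strictMono_rank_prod hmα hmβ) _ _ subset_rfl,
    intervalValue_prod hG hα hβ, rankProd_prod hmα.monotone hmβ.monotone _ _
      (Finset.sort_nodup _ _) (by simp), incidenceAlgebra_sum_apply]
  refine Finset.sum_congr rfl fun p hp => ?_
  have hle : p.1 ≤ m ∧ p.2 ≤ m := by
    rw [← mem_antidiagonal.1 hp]
    exact ⟨le_self_add, le_add_self⟩
  rw [IncidenceAlgebra.prod_mk, coeff_gtF hmα _ _ (Finsupp.support_mono hle.1),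
    coeff_gtF hmβ _ _ (Finsupp.support_mono hle.2)]

theorem chain_map_second_kind_multiplicative
    (k : Type) [Field k] (G : AB k →ₗ[k] k) (hG : IsCharacter k G)
    (α β : Type) [Fintype α] [Fintype β] [PartialOrder α] [PartialOrder β]
    [BoundedOrder α] [BoundedOrder β] (rkα : α → ℕ) (rkβ : β → ℕ)
    (hα : IsRankFun α rkα) (hβ : IsRankFun β rkβ) :
    gtF k G (· < ·) (fun p : α × β => rkα p.1 + rkβ p.2)
        ((⊥ : α), (⊥ : β)) ((⊤ : α), (⊤ : β)) =
      gtF k G (· < ·) rkα (⊥ : α) (⊤ : α) * gtF k G (· < ·) rkβ (⊥ : β) (⊤ : β) := by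
  classical
  let := Fintype.toLocallyFiniteOrder (α := α)
  let := Fintype.toLocallyFiniteOrder (α := β)
  exact chain_map_second_kind_multiplicative_general k G hG α β rkα rkβ hα.2 hβ.2 _ _ _ _

end Tcheb
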